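/- arXiv:2307.14365 — 2 statements merged into one kernel-verified Lean document; each statement's English description precedes it below -/
import Mathlib

section
/- Let f be analytic on the open unit disk 𝔻 with f(0)=0 and f'(0)=1, with Taylor coefficients a_n = f^{(n)}(0)/n!. Suppose F is analytic on a ball B(0,r) with r > 0, F(0)=0, and f(F(w)) = w for all |w| < r, and suppose g is analytic on a ball B(0,r') with r' > 0, g(0)=0, and F(w) = w·exp(g(w)) for 0 < |w| < r'. Define Γ_n = (1/2)·g^{(n)}(0)/n!. Then Γ₁Γ₃ − Γ₂² = (1/48)(13a₂⁴ − 12a₂²a₃ − 12a₃² + 12a₂a₄). -/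
open Metric

/-!
Put `F(w) = w u(w)` with `u = exp ∘ g`, and pass to Maclaurin series. Comparing coefficients in
`f(w u(w)) = w` gives the coefficients of `u` as polynomials in those of `f`, and comparing them in
`u' = u g'` gives the coefficients of `g` without ever expanding the exponential.
-/

section FormalPowerSeries

open PowerSeries

variable {R : Type*} [CommRing R]

lemma coeff_pow_mul_eq_zero_of_lt {φ : R⟦X⟧} (hφ : constantCoeff φ = 0) (ψ : R⟦X⟧) {n d : ℕ}
    (h : n < d) : coeff n (φ ^ d * ψ) = 0 :=
  X_pow_dvd_iff.mp (dvd_mul_of_dvd_left (pow_dvd_pow_of_dvd (X_dvd_iff.mpr hφ) d) ψ) n h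

lemma coeff_subst_eq_sum_range {φ : R⟦X⟧} (hφ : constantCoeff φ = 0) (A : R⟦X⟧) (n : ℕ) :
    coeff n (A.subst φ) = ∑ d ∈ Finset.range (n + 1), coeff d A * coeff n (φ ^ d) := by
  rw [coeff_subst' (.of_constantCoeff_zero' hφ)]
  refine finsum_eq_sum_of_support_subset _ fun d hd => ?_
  contrapose! hd
  have hnd : n < d := by simpa [Nat.lt_succ_iff] using hd
  simpa using mul_eq_zero_of_right _ (coeff_pow_mul_eq_zero_of_lt hφ 1 hnd)

lemma coeff_subst_X_mul (A U : R⟦X⟧) (n : ℕ) :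
    coeff n (A.subst (X * U)) =
      ∑ d ∈ Finset.range (n + 1), coeff d A * coeff (n - d) (U ^ d) := by
  rw [coeff_subst_eq_sum_range (by simp)]
  refine Finset.sum_congr rfl fun d hd => ?_
  rw [mul_pow, coeff_X_pow_mul', if_pos (Finset.mem_range_succ_iff.mp hd)]

lemma coeff_two_mul (φ ψ : R⟦X⟧) :
    coeff 2 (φ * ψ) = constantCoeff φ * coeff 2 ψ + coeff 1 φ * coeff 1 ψ
      + coeff 2 φ * constantCoeff ψ := by
  simp only [coeff_mul, Finset.Nat.sum_antidiagonal_eq_sum_range_succ_mk, Finset.sum_range_succ,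
    Finset.sum_range_zero, zero_add, coeff_zero_eq_constantCoeff_apply, Nat.reduceSub]

lemma coeff_one_subst_X_mul (A U : R⟦X⟧) :
    coeff 1 (A.subst (X * U)) = coeff 1 A * constantCoeff U := by
  simp [coeff_subst_X_mul, Finset.sum_range_succ, coeff_one]

lemma coeff_two_subst_X_mul (A U : R⟦X⟧) :
    coeff 2 (A.subst (X * U)) = coeff 1 A * coeff 1 U + coeff 2 A * constantCoeff U ^ 2 := by
  simp [coeff_subst_X_mul, Finset.sum_range_succ, coeff_one]

lemma coeff_three_subst_X_mul (A U : R⟦X⟧) :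
    coeff 3 (A.subst (X * U)) = coeff 1 A * coeff 2 U
      + coeff 2 A * (2 * coeff 1 U * constantCoeff U) + coeff 3 A * constantCoeff U ^ 3 := by
  simp [coeff_subst_X_mul, Finset.sum_range_succ, coeff_one, coeff_one_pow]

lemma coeff_four_subst_X_mul (A U : R⟦X⟧) :
    coeff 4 (A.subst (X * U)) = coeff 1 A * coeff 3 U
      + coeff 2 A * (2 * constantCoeff U * coeff 2 U + coeff 1 U ^ 2)
      + coeff 3 A * (3 * coeff 1 U * constantCoeff U ^ 2) + coeff 4 A * constantCoeff U ^ 4 := by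
  have hU : coeff 2 (U ^ 2) = 2 * constantCoeff U * coeff 2 U + coeff 1 U ^ 2 := by
    rw [sq, coeff_two_mul]
    ring
  simp [coeff_subst_X_mul, Finset.sum_range_succ, coeff_one, coeff_one_pow, hU]

section CompositionalInverse

variable {A U : R⟦X⟧} (hAU : A.subst (X * U) = X) (hA : coeff 1 A = 1)
include hAU hA

lemma constantCoeff_of_subst_X_mul_eq_X : constantCoeff U = 1 := by
  have h := coeff_one_subst_X_mul A U
  rw [hAU, coeff_one_X, hA] at h
  linear_combination -h

lemma coeff_one_of_subst_X_mul_eq_X : coeff 1 U = -coeff 2 A := by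
  have h := coeff_two_subst_X_mul A U
  rw [hAU, coeff_X, if_neg (by decide), hA, constantCoeff_of_subst_X_mul_eq_X hAU hA] at h
  linear_combination -h

lemma coeff_two_of_subst_X_mul_eq_X : coeff 2 U = 2 * coeff 2 A ^ 2 - coeff 3 A := by
  have h := coeff_three_subst_X_mul A U
  rw [hAU, coeff_X, if_neg (by decide), hA, constantCoeff_of_subst_X_mul_eq_X hAU hA,
    coeff_one_of_subst_X_mul_eq_X hAU hA] at h
  linear_combination -h

lemma coeff_three_of_subst_X_mul_eq_X :
    coeff 3 U = 5 * coeff 2 A * coeff 3 A - 5 * coeff 2 A ^ 3 - coeff 4 A := by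
  have h := coeff_four_subst_X_mul A U
  rw [hAU, coeff_X, if_neg (by decide), hA, constantCoeff_of_subst_X_mul_eq_X hAU hA,
    coeff_one_of_subst_X_mul_eq_X hAU hA, coeff_two_of_subst_X_mul_eq_X hAU hA] at h
  linear_combination -h

end CompositionalInverse

lemma constantCoeff_derivative (φ : R⟦X⟧) : constantCoeff (d⁄dX R φ) = coeff 1 φ := by
  simp [← coeff_zero_eq_constantCoeff_apply, coeff_derivative]

section Logarithm

variable {U V : R⟦X⟧} (hUV : d⁄dX R U = U * d⁄dX R V) (hU : constantCoeff U = 1)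
include hUV hU

lemma coeff_one_of_derivative_eq_mul : coeff 1 V = coeff 1 U := by
  rw [← constantCoeff_derivative, ← constantCoeff_derivative, hUV, map_mul, hU, one_mul]

lemma two_mul_coeff_two_of_derivative_eq_mul :
    2 * coeff 2 V = 2 * coeff 2 U - coeff 1 U ^ 2 := by
  have h := congrArg (coeff 1) hUV
  simp only [coeff_one_mul, constantCoeff_derivative, coeff_derivative, Nat.reduceAdd,
    Nat.cast_one, hU, coeff_one_of_derivative_eq_mul hUV hU] at h
  linear_combination -h

lemma three_mul_coeff_three_of_derivative_eq_mul :
    3 * coeff 3 V = 3 * coeff 3 U - 3 * coeff 1 U * coeff 2 U + coeff 1 U ^ 3 := by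
  have h := congrArg (coeff 2) hUV
  simp only [coeff_two_mul, constantCoeff_derivative, coeff_derivative, Nat.reduceAdd,
    Nat.cast_ofNat, Nat.cast_one, hU, coeff_one_of_derivative_eq_mul hUV hU] at h
  linear_combination -h - coeff 1 U * two_mul_coeff_two_of_derivative_eq_mul hUV hU

end Logarithm

lemma hankel_of_subst_eq_X_of_derivative_eq_mul {A U V : R⟦X⟧} (hAU : A.subst (X * U) = X)
    (hA : coeff 1 A = 1) (hUV : d⁄dX R U = U * d⁄dX R V) :
    12 * (coeff 1 V * coeff 3 V - coeff 2 V ^ 2) =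
      13 * coeff 2 A ^ 4 - 12 * coeff 2 A ^ 2 * coeff 3 A - 12 * coeff 3 A ^ 2
        + 12 * coeff 2 A * coeff 4 A := by
  have hU := constantCoeff_of_subst_X_mul_eq_X hAU hA
  have hV₁ := coeff_one_of_derivative_eq_mul hUV hU
  have hV₂ := two_mul_coeff_two_of_derivative_eq_mul hUV hU
  have hV₃ := three_mul_coeff_three_of_derivative_eq_mul hUV hU
  rw [coeff_one_of_subst_X_mul_eq_X hAU hA] at hV₁ hV₂ hV₃
  rw [coeff_two_of_subst_X_mul_eq_X hAU hA] at hV₂ hV₃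
  rw [coeff_three_of_subst_X_mul_eq_X hAU hA] at hV₃
  rw [hV₁]
  linear_combination (-4 * coeff 2 A) * hV₃
    - 3 * (2 * coeff 2 V + (3 * coeff 2 A ^ 2 - 2 * coeff 3 A)) * hV₂

end FormalPowerSeries

section MaclaurinSeries

open PowerSeries
open scoped Topology

variable {𝕜 : Type*} [NontriviallyNormedField 𝕜] {f g : 𝕜 → 𝕜}

/-- The Taylor series of `f` at the origin as a formal power series. It is meant for functions
analytic at `0`; elsewhere the coefficients are those of the total function `iteratedDeriv`. -/
noncomputable def maclaurinSeries (f : 𝕜 → 𝕜) : 𝕜⟦X⟧ :=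
  PowerSeries.mk fun n => iteratedDeriv n f 0 / (n.factorial : 𝕜)

lemma coeff_maclaurinSeries (f : 𝕜 → 𝕜) (n : ℕ) :
    coeff n (maclaurinSeries f) = iteratedDeriv n f 0 / (n.factorial : 𝕜) :=
  coeff_mk _ _

lemma constantCoeff_maclaurinSeries (f : 𝕜 → 𝕜) : constantCoeff (maclaurinSeries f) = f 0 := by
  simp [← coeff_zero_eq_constantCoeff_apply, coeff_maclaurinSeries]

lemma maclaurinSeries_congr (h : f =ᶠ[𝓝 0] g) : maclaurinSeries f = maclaurinSeries g := by
  ext n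
  rw [coeff_maclaurinSeries, coeff_maclaurinSeries, h.iteratedDeriv_eq]

lemma maclaurinSeries_const (c : 𝕜) : maclaurinSeries (fun _ => c) = C c := by
  ext n
  rcases n with _ | n <;> simp [coeff_maclaurinSeries, iteratedDeriv_const, coeff_C]

lemma maclaurinSeries_id : maclaurinSeries (fun z : 𝕜 => z) = X := by
  ext n
  by_cases hn : n = 1 <;> simp [coeff_maclaurinSeries, iteratedDeriv_fun_id_zero, coeff_X, hn]

lemma maclaurinSeries_deriv [CharZero 𝕜] (f : 𝕜 → 𝕜) :
    maclaurinSeries (deriv f) = d⁄dX 𝕜 (maclaurinSeries f) := by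
  ext n
  have hn : (n + 1 : 𝕜) ≠ 0 := n.cast_add_one_ne_zero
  rw [coeff_derivative, coeff_maclaurinSeries, coeff_maclaurinSeries, ← iteratedDeriv_succ',
    Nat.factorial_succ]
  push_cast
  field_simp

variable [CompleteSpace 𝕜]

lemma maclaurinSeries_add (hf : AnalyticAt 𝕜 f 0) (hg : AnalyticAt 𝕜 g 0) :
    maclaurinSeries (fun z => f z + g z) = maclaurinSeries f + maclaurinSeries g := by
  ext n
  simp only [map_add, coeff_maclaurinSeries, ← add_div,
    iteratedDeriv_fun_add hf.contDiffAt hg.contDiffAt]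

lemma maclaurinSeries_sum {ι : Type*} (s : Finset ι) {f : ι → 𝕜 → 𝕜}
    (hf : ∀ i ∈ s, AnalyticAt 𝕜 (f i) 0) :
    maclaurinSeries (fun z => ∑ i ∈ s, f i z) = ∑ i ∈ s, maclaurinSeries (f i) := by
  ext n
  simp only [map_sum, coeff_maclaurinSeries, ← Finset.sum_div,
    iteratedDeriv_fun_sum fun i hi => (hf i hi).contDiffAt]

variable [CharZero 𝕜]

lemma maclaurinSeries_mul (hf : AnalyticAt 𝕜 f 0) (hg : AnalyticAt 𝕜 g 0) :
    maclaurinSeries (fun z => f z * g z) = maclaurinSeries f * maclaurinSeries g := by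
  ext n
  rw [coeff_mul, Finset.Nat.sum_antidiagonal_eq_sum_range_succ_mk, coeff_maclaurinSeries,
    iteratedDeriv_fun_mul hf.contDiffAt hg.contDiffAt, Finset.sum_div]
  refine Finset.sum_congr rfl fun i hi => ?_
  rw [coeff_maclaurinSeries, coeff_maclaurinSeries,
    Nat.cast_choose 𝕜 (Finset.mem_range_succ_iff.mp hi)]
  have hn : (n.factorial : 𝕜) ≠ 0 := mod_cast n.factorial_ne_zero
  field_simp

lemma maclaurinSeries_pow (hf : AnalyticAt 𝕜 f 0) (n : ℕ) :
    maclaurinSeries (fun z => f z ^ n) = maclaurinSeries f ^ n := by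
  induction n with
  | zero => simpa using maclaurinSeries_const (1 : 𝕜)
  | succ n ih => simp only [pow_succ, maclaurinSeries_mul (hf.fun_pow n) hf, ih]

lemma exists_maclaurinSeries_comp_eq_sum_add_pow_mul (hf : AnalyticAt 𝕜 f 0)
    (hg : AnalyticAt 𝕜 g 0) (hg₀ : g 0 = 0) (n : ℕ) :
    ∃ ψ : 𝕜⟦X⟧, maclaurinSeries (fun z => f (g z)) =
      ∑ d ∈ Finset.range n, C (coeff d (maclaurinSeries f)) * maclaurinSeries g ^ d
        + maclaurinSeries g ^ n * ψ := by
  obtain ⟨h, hh, hfh⟩ := hf.exists_eq_sum_add_pow_mul n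
  have hhg : AnalyticAt 𝕜 (fun z => h (g z)) 0 := AnalyticAt.fun_comp (by rwa [hg₀]) hg
  have hfg : (fun z => f (g z)) = fun z =>
      ∑ d ∈ Finset.range n, coeff d (maclaurinSeries f) * g z ^ d + g z ^ n * h (g z) := by
    funext z
    rw [hfh (g z), smul_eq_mul]
    congr 1
    refine Finset.sum_congr rfl fun d _ => ?_
    rw [coeff_maclaurinSeries, smul_eq_mul]
    ring
  have hterm (d : ℕ) : AnalyticAt 𝕜 (fun z => coeff d (maclaurinSeries f) * g z ^ d) 0 :=
    analyticAt_const.mul (hg.fun_pow d)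
  refine ⟨maclaurinSeries fun z => h (g z), ?_⟩
  rw [hfg, maclaurinSeries_add (Finset.analyticAt_fun_sum _ fun d _ => hterm d)
    ((hg.fun_pow _).fun_mul hhg), maclaurinSeries_sum _ fun d _ => hterm d,
    maclaurinSeries_mul (hg.fun_pow _) hhg, maclaurinSeries_pow hg]
  simp only [maclaurinSeries_mul analyticAt_const (hg.fun_pow _), maclaurinSeries_const,
    maclaurinSeries_pow hg]

lemma maclaurinSeries_comp (hf : AnalyticAt 𝕜 f 0) (hg : AnalyticAt 𝕜 g 0) (hg₀ : g 0 = 0) :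
    maclaurinSeries (fun z => f (g z)) = (maclaurinSeries f).subst (maclaurinSeries g) := by
  have hφ : constantCoeff (maclaurinSeries g) = 0 := by rw [constantCoeff_maclaurinSeries, hg₀]
  ext n
  obtain ⟨ψ, hψ⟩ := exists_maclaurinSeries_comp_eq_sum_add_pow_mul hf hg hg₀ (n + 1)
  rw [hψ, map_add, map_sum, coeff_pow_mul_eq_zero_of_lt hφ _ n.lt_succ_self, add_zero,
    coeff_subst_eq_sum_range hφ]
  simp only [coeff_C_mul]

end MaclaurinSeries

section LogarithmicCoefficients

open PowerSeries
open scoped Topology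

variable {𝕜 : Type*} [RCLike 𝕜] {g : 𝕜 → 𝕜}

lemma analyticAt_exp_comp {c : 𝕜} (hg : AnalyticAt 𝕜 g c) :
    AnalyticAt 𝕜 (fun w => NormedSpace.exp (g w)) c :=
  (NormedSpace.exp_analytic (g c)).fun_comp hg

lemma derivative_maclaurinSeries_exp_comp (hg : AnalyticAt 𝕜 g 0) :
    d⁄dX 𝕜 (maclaurinSeries fun w => NormedSpace.exp (g w)) =
      maclaurinSeries (fun w => NormedSpace.exp (g w)) * d⁄dX 𝕜 (maclaurinSeries g) := by
  have hderiv : deriv (fun w => NormedSpace.exp (g w)) =ᶠ[𝓝 0]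
      fun w => NormedSpace.exp (g w) * deriv g w := by
    filter_upwards [hg.eventually_analyticAt] with w hw
    exact (hasDerivAt_exp.comp w hw.differentiableAt.hasDerivAt).deriv
  rw [← maclaurinSeries_deriv, maclaurinSeries_congr hderiv,
    maclaurinSeries_mul (analyticAt_exp_comp hg) hg.deriv, maclaurinSeries_deriv]

theorem hankel_log_inverse_formula_general {f F : 𝕜 → 𝕜} {a Γ : ℕ → 𝕜}
    (hf : AnalyticAt 𝕜 f 0) (hf₁ : deriv f 0 = 1)
    (ha : ∀ n, a n = iteratedDeriv n f 0 / (n.factorial : 𝕜))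
    (hinv : ∀ᶠ w in 𝓝 0, f (F w) = w)
    (hg : AnalyticAt 𝕜 g 0) (hFg : ∀ᶠ w in 𝓝 0, F w = w * NormedSpace.exp (g w))
    (hΓ : ∀ n, Γ n = (1 / 2 : 𝕜) * iteratedDeriv n g 0 / (n.factorial : 𝕜)) :
    Γ 1 * Γ 3 - Γ 2 ^ 2
      = (1 / 48 : 𝕜) * (13 * a 2 ^ 4 - 12 * a 2 ^ 2 * a 3 - 12 * a 3 ^ 2
        + 12 * a 2 * a 4) := by
  have hexp := analyticAt_exp_comp hg
  have hid : AnalyticAt 𝕜 (fun w : 𝕜 => w) 0 := analyticAt_id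
  have hfexp : (fun w => f (w * NormedSpace.exp (g w))) =ᶠ[𝓝 0] fun w => w := by
    filter_upwards [hinv, hFg] with w hw hFw
    rw [← hFw, hw]
  have hsubst : (maclaurinSeries f).subst
      (X * maclaurinSeries fun w => NormedSpace.exp (g w)) = X := by
    rw [← maclaurinSeries_id, ← maclaurinSeries_mul hid hexp,
      ← maclaurinSeries_comp hf (hid.fun_mul hexp) (by simp), maclaurinSeries_congr hfexp]
  have hf₁' : coeff 1 (maclaurinSeries f) = 1 := by simp [coeff_maclaurinSeries, hf₁]
  have ha' (n : ℕ) : a n = coeff n (maclaurinSeries f) := by rw [ha, coeff_maclaurinSeries]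
  have hΓ' (n : ℕ) : Γ n = 1 / 2 * coeff n (maclaurinSeries g) := by
    rw [hΓ, coeff_maclaurinSeries, mul_div_assoc]
  simp only [ha', hΓ']
  linear_combination (1 / 48 : 𝕜) * hankel_of_subst_eq_X_of_derivative_eq_mul hsubst hf₁'
    (derivative_maclaurinSeries_exp_comp hg)

end LogarithmicCoefficients

/-- The second Hankel determinant of logarithmic coefficients of the inverse:
`Γ₁Γ₃ − Γ₂² = (1/48)(13a₂⁴ − 12a₂²a₃ − 12a₃² + 12a₂a₄)`. -/
theorem hankel_log_inverse_formula
    (f F g : ℂ → ℂ) (r r' : ℝ) (a Γ : ℕ → ℂ)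
    (hf : AnalyticOnNhd ℂ f (ball (0 : ℂ) 1))
    (hf0 : f 0 = 0) (hf1 : deriv f 0 = 1)
    (ha : ∀ n, a n = iteratedDeriv n f 0 / (n.factorial : ℂ))
    (hr : 0 < r) (hF : AnalyticOnNhd ℂ F (ball (0 : ℂ) r)) (hF0 : F 0 = 0)
    (hinv : ∀ w ∈ ball (0 : ℂ) r, f (F w) = w)
    (hr' : 0 < r') (hg : AnalyticOnNhd ℂ g (ball (0 : ℂ) r')) (hg0 : g 0 = 0)
    (hFg : ∀ w ∈ ball (0 : ℂ) r', w ≠ 0 → F w = w * Complex.exp (g w))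
    (hΓ : ∀ n, Γ n = (1 / 2 : ℂ) * iteratedDeriv n g 0 / (n.factorial : ℂ)) :
    Γ 1 * Γ 3 - Γ 2 ^ 2
      = (1 / 48 : ℂ) * (13 * a 2 ^ 4 - 12 * a 2 ^ 2 * a 3 - 12 * a 3 ^ 2
        + 12 * a 2 * a 4) := by
  have hFexp : ∀ w ∈ ball (0 : ℂ) r', F w = w * NormedSpace.exp (g w) := fun w hw => by
    rcases eq_or_ne w 0 with rfl | hw₀
    · simp [hF0]
    · rw [hFg w hw hw₀, Complex.exp_eq_exp_ℂ]
  exact hankel_log_inverse_formula_general (hf 0 (mem_ball_self one_pos)) hf1 ha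
    (Filter.eventually_of_mem (ball_mem_nhds 0 hr) hinv) (hg 0 (mem_ball_self hr'))
    (Filter.eventually_of_mem (ball_mem_nhds 0 hr') hFexp) hΓ
end

section
/- Let f be analytic on the open unit disk 𝔻 with f(0)=0 and f'(0)=1, with Taylor coefficients a_n = f^{(n)}(0)/n!, and let p be analytic on 𝔻 with p(0)=1, with Taylor coefficients c_n = p^{(n)}(0)/n!. If 2·z·f''(z) = f'(z)·(p(z) − 1) for all z ∈ 𝔻, then (1/48)(13a₂⁴ − 12a₂²a₃ − 12a₃² + 12a₂a₄) = (1/36864)(11c₁⁴ − 40c₁²c₂ − 64c₂² + 96c₁c₃). -/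
open Metric

/-!
Taylor expansion at a point turns pointwise products, differentiation and `z ↦ z - x` into
products, formal differentiation and the variable `X`. Hence the differential equation becomes
`2 X F'' = F' (P - 1)` for the Taylor series `F`, `P` of `f`, `p`. Comparing coefficients up to
order three expresses `c₁`, `c₂`, `c₃` as polynomials in `a₂`, `a₃`, `a₄`, and substituting them
makes both sides of the claim the same polynomial.
-/

open PowerSeries Finset Filter
open scoped ContDiff Topology Nat

section TaylorSeries

variable {𝕜 : Type*} [NontriviallyNormedField 𝕜] {f g : 𝕜 → 𝕜} {x : 𝕜}

/-- The formal Taylor series of `f` at `x`, in the variable `X = z - x`. It is meant for `f` smooth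
at `x` and `𝕜` of characteristic zero; otherwise its coefficients can be junk values. -/
noncomputable def taylorSeries (f : 𝕜 → 𝕜) (x : 𝕜) : 𝕜⟦X⟧ :=
  PowerSeries.mk fun n ↦ iteratedDeriv n f x / n !

theorem coeff_taylorSeries (f : 𝕜 → 𝕜) (x : 𝕜) (n : ℕ) :
    coeff n (taylorSeries f x) = iteratedDeriv n f x / n ! :=
  coeff_mk _ _

theorem taylorSeries_congr (h : f =ᶠ[𝓝 x] g) : taylorSeries f x = taylorSeries g x := by
  ext n
  rw [coeff_taylorSeries, coeff_taylorSeries, h.iteratedDeriv_eq n]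

theorem taylorSeries_const (a x : 𝕜) : taylorSeries (fun _ ↦ a) x = C a := by
  ext n
  rw [coeff_taylorSeries, iteratedDeriv_const, coeff_C]
  split_ifs with hn <;> simp [hn]

theorem taylorSeries_sub (hf : ContDiffAt 𝕜 ∞ f x) (hg : ContDiffAt 𝕜 ∞ g x) :
    taylorSeries (fun z ↦ f z - g z) x = taylorSeries f x - taylorSeries g x := by
  ext n
  simp only [coeff_taylorSeries, map_sub]
  rw [iteratedDeriv_fun_sub (hf.of_le (mod_cast le_top)) (hg.of_le (mod_cast le_top)), sub_div]

theorem taylorSeries_sub_const_self (x : 𝕜) : taylorSeries (fun z ↦ z - x) x = X := by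
  ext n
  have htranslate : iteratedDeriv n (fun z ↦ z - x) x = iteratedDeriv n id (x - x) :=
    congrFun (iteratedDeriv_comp_sub_const n id x) x
  rw [coeff_taylorSeries, htranslate, sub_self, iteratedDeriv_id, coeff_X]
  rcases n with _ | _ | n <;> simp

variable [CharZero 𝕜]

theorem taylorSeries_mul (hf : ContDiffAt 𝕜 ∞ f x) (hg : ContDiffAt 𝕜 ∞ g x) :
    taylorSeries (fun z ↦ f z * g z) x = taylorSeries f x * taylorSeries g x := by
  ext n
  rw [coeff_taylorSeries,
    iteratedDeriv_fun_mul (hf.of_le (mod_cast le_top)) (hg.of_le (mod_cast le_top)), coeff_mul,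
    Nat.sum_antidiagonal_eq_sum_range_succ_mk, sum_div]
  refine sum_congr rfl fun i hi ↦ ?_
  have hin : i ≤ n := Nat.le_of_lt_succ (mem_range.mp hi)
  have hfact (m : ℕ) : (m ! : 𝕜) ≠ 0 := mod_cast m.factorial_ne_zero
  rw [coeff_taylorSeries, coeff_taylorSeries, Nat.cast_choose 𝕜 hin]
  field_simp [hfact]

theorem taylorSeries_deriv (f : 𝕜 → 𝕜) (x : 𝕜) :
    taylorSeries (deriv f) x = derivative 𝕜 (taylorSeries f x) := by
  ext n
  rw [coeff_taylorSeries, coeff_derivative, coeff_taylorSeries, iteratedDeriv_succ',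
    Nat.factorial_succ, Nat.cast_mul, Nat.cast_succ]
  have hn : (n + 1 : 𝕜) ≠ 0 := n.cast_add_one_ne_zero
  field_simp

/-- For `κ = 1 / (1 - α)` the hypothesis is `1 + (z - x) f'' / f' = (1 - α) p + α`, the equation
relating a convex function of order `α` to its Carathéodory function; `α = 1 / 2` gives `κ = 2`. -/
theorem taylorSeries_convex_equation {p : 𝕜 → 𝕜} {κ : 𝕜}
    (hf : ContDiffAt 𝕜 ∞ f x) (hp : ContDiffAt 𝕜 ∞ p x)
    (hrel : ∀ᶠ z in 𝓝 x, κ * (z - x) * deriv (deriv f) z = deriv f z * (p z - 1)) :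
    C κ * X * derivative 𝕜 (derivative 𝕜 (taylorSeries f x)) =
      derivative 𝕜 (taylorSeries f x) * (taylorSeries p x - 1) := by
  have hf' : ContDiffAt 𝕜 ∞ (deriv f) x := hf.derivWithin le_rfl
  have hf'' : ContDiffAt 𝕜 ∞ (deriv (deriv f)) x := hf'.derivWithin le_rfl
  have hsub : ContDiffAt 𝕜 ∞ (fun z ↦ z - x) x := by fun_prop
  have hseries := taylorSeries_congr hrel
  rwa [taylorSeries_mul (contDiffAt_const.mul hsub) hf'', taylorSeries_mul contDiffAt_const hsub,
    taylorSeries_mul hf' (hp.sub contDiffAt_const), taylorSeries_sub hp contDiffAt_const,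
    taylorSeries_const, taylorSeries_const, taylorSeries_sub_const_self, taylorSeries_deriv,
    taylorSeries_deriv, map_one] at hseries

end TaylorSeries

section FormalEquation

variable {R : Type*} [CommRing R] {κ : R} {F P : R⟦X⟧}

theorem coeff_X_mul_derivative (F : R⟦X⟧) (n : ℕ) :
    coeff n (X * derivative R F) = n * coeff n F := by
  cases n with
  | zero => simp
  | succ n => rw [coeff_succ_X_mul, coeff_derivative, mul_comm, Nat.cast_succ]

theorem coeff_recurrence_of_convex_equation
    (h : C κ * X * derivative R (derivative R F) = derivative R F * (P - 1)) (n : ℕ) :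
    κ * (n * (n + 1) * coeff (n + 1) F) =
      ∑ ij ∈ antidiagonal n, (ij.1 + 1) * coeff (ij.1 + 1) F * coeff ij.2 (P - 1) := by
  have hcoeff := congrArg (coeff n) h
  rw [mul_assoc, coeff_C_mul, coeff_X_mul_derivative, coeff_mul] at hcoeff
  simp only [coeff_derivative] at hcoeff
  simpa only [mul_assoc, mul_comm (coeff _ F)] using hcoeff

theorem coeff_eq_of_convex_equation
    (h : C κ * X * derivative R (derivative R F) = derivative R F * (P - 1))
    (hF : coeff 1 F = 1) :
    coeff 1 P = 2 * κ * coeff 2 F ∧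
    coeff 2 P = 6 * κ * coeff 3 F - 4 * κ * coeff 2 F ^ 2 ∧
    coeff 3 P = 12 * κ * coeff 4 F - 18 * κ * coeff 2 F * coeff 3 F + 8 * κ * coeff 2 F ^ 3 := by
  have hrec := coeff_recurrence_of_convex_equation h
  have hP₀ : constantCoeff P - 1 = 0 := by
    simpa [hF, eq_comm] using hrec 0
  have hP₁ : κ * (2 * coeff 2 F) = coeff 1 P := by
    simpa [Nat.antidiagonal_succ, hF, coeff_one, hP₀, one_add_one_eq_two] using hrec 1
  have hP₂ : κ * (2 * (2 + 1) * coeff 3 F) = coeff 2 P + 2 * coeff 2 F * coeff 1 P := by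
    simpa [Nat.antidiagonal_succ, hF, coeff_one, hP₀, one_add_one_eq_two] using hrec 2
  have hP₃ : κ * (3 * (3 + 1) * coeff 4 F) =
      coeff 3 P + (2 * coeff 2 F * coeff 2 P + (2 + 1) * coeff 3 F * coeff 1 P) := by
    simpa [Nat.antidiagonal_succ, hF, coeff_one, hP₀, one_add_one_eq_two] using hrec 3
  refine ⟨?_, ?_, ?_⟩
  · linear_combination -hP₁
  · linear_combination -hP₂ + 2 * coeff 2 F * hP₁
  · linear_combination -hP₃ + 2 * coeff 2 F * hP₂ + (3 * coeff 3 F - 4 * coeff 2 F ^ 2) * hP₁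

end FormalEquation

theorem convex_hankel_caratheodory_formula_general
    {𝕜 : Type*} [NontriviallyNormedField 𝕜] [CharZero 𝕜]
    (f p : 𝕜 → 𝕜) (x : 𝕜) (a c : ℕ → 𝕜)
    (hf : ContDiffAt 𝕜 ∞ f x) (hf1 : deriv f x = 1)
    (ha : ∀ n, a n = iteratedDeriv n f x / (n ! : 𝕜))
    (hp : ContDiffAt 𝕜 ∞ p x)
    (hc : ∀ n, c n = iteratedDeriv n p x / (n ! : 𝕜))
    (hrel : ∀ᶠ z in 𝓝 x, 2 * (z - x) * deriv (deriv f) z = deriv f z * (p z - 1)) :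
    (1 / 48 : 𝕜) * (13 * a 2 ^ 4 - 12 * a 2 ^ 2 * a 3 - 12 * a 3 ^ 2
        + 12 * a 2 * a 4)
      = (1 / 36864 : 𝕜) * (11 * c 1 ^ 4 - 40 * c 1 ^ 2 * c 2 - 64 * c 2 ^ 2
        + 96 * c 1 * c 3) := by
  have hnorm : coeff 1 (taylorSeries f x) = 1 := by simp [coeff_taylorSeries, hf1]
  obtain ⟨hc₁, hc₂, hc₃⟩ :=
    coeff_eq_of_convex_equation (taylorSeries_convex_equation hf hp hrel) hnorm
  simp only [coeff_taylorSeries, ← ha, ← hc] at hc₁ hc₂ hc₃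
  rw [hc₁, hc₂, hc₃]
  ring

/-- For `f ∈ 𝒜` with `2 z f''(z) = f'(z)(p(z) − 1)`, the Hankel determinant
expression in terms of the Carathéodory coefficients:
`(1/48)(13a₂⁴ − 12a₂²a₃ − 12a₃² + 12a₂a₄)
  = (1/36864)(11c₁⁴ − 40c₁²c₂ − 64c₂² + 96c₁c₃)`. -/
theorem convex_hankel_caratheodory_formula
    (f p : ℂ → ℂ) (a c : ℕ → ℂ)
    (hf : AnalyticOnNhd ℂ f (ball (0 : ℂ) 1))
    (hf0 : f 0 = 0) (hf1 : deriv f 0 = 1)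
    (ha : ∀ n, a n = iteratedDeriv n f 0 / (n.factorial : ℂ))
    (hp : AnalyticOnNhd ℂ p (ball (0 : ℂ) 1)) (hp0 : p 0 = 1)
    (hc : ∀ n, c n = iteratedDeriv n p 0 / (n.factorial : ℂ))
    (hrel : ∀ z ∈ ball (0 : ℂ) 1,
      2 * z * deriv (deriv f) z = deriv f z * (p z - 1)) :
    (1 / 48 : ℂ) * (13 * a 2 ^ 4 - 12 * a 2 ^ 2 * a 3 - 12 * a 3 ^ 2
        + 12 * a 2 * a 4)
      = (1 / 36864 : ℂ) * (11 * c 1 ^ 4 - 40 * c 1 ^ 2 * c 2 - 64 * c 2 ^ 2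
        + 96 * c 1 * c 3) := by
  have h₀ : (0 : ℂ) ∈ ball (0 : ℂ) 1 := mem_ball_self one_pos
  refine convex_hankel_caratheodory_formula_general f p 0 a c (hf 0 h₀).contDiffAt hf1 ha
    (hp 0 h₀).contDiffAt hc ?_
  filter_upwards [isOpen_ball.mem_nhds h₀] with z hz using by simpa only [sub_zero] using hrel z hz
end
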